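/- Let Ω ⊆ ℝ³ be open, α : Ω → ℍ(ℂ) a differentiable purely vectorial function, and u : Ω → ℍ(ℂ) twice differentiable with components u = u₀ + u₁e₁ + u₂e₂ + u₃e₃. Then on Ω: (D + M^α)(D − M^α)u = Σ_{k=0}^{3} (−Δu_k − α²u_k − (Dα^{(k)})u_k)·e_k, where α^{(0)} := α and α^{(k)} := e_k α ē_k = −e_k α e_k for k = 1,2,3. -/

import Mathlib

noncomputable section

abbrev HC := Quaternion ℂ

def e1 : HC := ⟨0, 1, 0, 0⟩
def e2 : HC := ⟨0, 0, 1, 0⟩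
def e3 : HC := ⟨0, 0, 0, 1⟩

def pd (k : Fin 3) (g : (Fin 3 → ℝ) → ℂ) (x : Fin 3 → ℝ) : ℂ :=
  fderiv ℝ g x (Pi.single k 1)

def lap (g : (Fin 3 → ℝ) → ℂ) (x : Fin 3 → ℝ) : ℂ :=
  pd 0 (pd 0 g) x + pd 1 (pd 1 g) x + pd 2 (pd 2 g) x

def pdq (k : Fin 3) (f : (Fin 3 → ℝ) → HC) (x : Fin 3 → ℝ) : HC :=
  ⟨pd k (fun y => (f y).re) x, pd k (fun y => (f y).imI) x,
   pd k (fun y => (f y).imJ) x, pd k (fun y => (f y).imK) x⟩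

def Dq (f : (Fin 3 → ℝ) → HC) (x : Fin 3 → ℝ) : HC :=
  e1 * pdq 0 f x + e2 * pdq 1 f x + e3 * pdq 2 f x

def lapq (f : (Fin 3 → ℝ) → HC) (x : Fin 3 → ℝ) : HC :=
  ⟨lap (fun y => (f y).re) x, lap (fun y => (f y).imI) x,
   lap (fun y => (f y).imJ) x, lap (fun y => (f y).imK) x⟩

def QDiffOn (f : (Fin 3 → ℝ) → HC) (Ω : Set (Fin 3 → ℝ)) : Prop :=
  DifferentiableOn ℝ (fun y => (f y).re) Ω ∧ DifferentiableOn ℝ (fun y => (f y).imI) Ω ∧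
  DifferentiableOn ℝ (fun y => (f y).imJ) Ω ∧ DifferentiableOn ℝ (fun y => (f y).imK) Ω

def QC2On (f : (Fin 3 → ℝ) → HC) (Ω : Set (Fin 3 → ℝ)) : Prop :=
  ContDiffOn ℝ 2 (fun y => (f y).re) Ω ∧ ContDiffOn ℝ 2 (fun y => (f y).imI) Ω ∧
  ContDiffOn ℝ 2 (fun y => (f y).imJ) Ω ∧ ContDiffOn ℝ 2 (fun y => (f y).imK) Ω


/-- Build a biquaternion from its four complex components. -/
def quat (a b c d : ℂ) : HC := ⟨a, b, c, d⟩

/-- The basis `e₀ = 1, e₁, e₂, e₃`. -/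
def ee : Fin 4 → HC := ![1, e1, e2, e3]

/-- The `k`-th complex component of a biquaternion. -/
def qc (k : Fin 4) (q : HC) : ℂ := ![q.re, q.imI, q.imJ, q.imK] k

/-- The involution `q^{(k)} = e_k q ē_k` (for `k = 0` this is the identity,
for `k = 1,2,3` it is `−e_k q e_k`). -/
def invol (k : Fin 4) (q : HC) : HC := if k = 0 then q else -(ee k * q * ee k)

theorem pd_add' (k : Fin 3) (f g : (Fin 3 → ℝ) → ℂ) (x : Fin 3 → ℝ)
    (hf : DifferentiableAt ℝ f x) (hg : DifferentiableAt ℝ g x) :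
    pd k (fun y => f y + g y) x = pd k f x + pd k g x := by
  unfold pd
  rw [fderiv_fun_add hf hg]; rfl

theorem pd_sub' (k : Fin 3) (f g : (Fin 3 → ℝ) → ℂ) (x : Fin 3 → ℝ)
    (hf : DifferentiableAt ℝ f x) (hg : DifferentiableAt ℝ g x) :
    pd k (fun y => f y - g y) x = pd k f x - pd k g x := by
  unfold pd
  rw [fderiv_fun_sub hf hg]; rfl

theorem pd_neg' (k : Fin 3) (f : (Fin 3 → ℝ) → ℂ) (x : Fin 3 → ℝ) :
    pd k (fun y => - f y) x = - pd k f x := by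
  unfold pd
  rw [fderiv_fun_neg]; rfl

theorem pd_mul' (k : Fin 3) (f g : (Fin 3 → ℝ) → ℂ) (x : Fin 3 → ℝ)
    (hf : DifferentiableAt ℝ f x) (hg : DifferentiableAt ℝ g x) :
    pd k (fun y => f y * g y) x = f x * pd k g x + pd k f x * g x := by
  unfold pd
  rw [fderiv_fun_mul hf hg]
  simp [mul_comm]

theorem pd_diff (k : Fin 3) (g : (Fin 3 → ℝ) → ℂ) (x : Fin 3 → ℝ)
    (hg : ContDiffAt ℝ 2 g x) : DifferentiableAt ℝ (pd k g) x := by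
  have h : ContDiffAt ℝ 1 (fderiv ℝ g) x := hg.fderiv_right (by norm_num)
  exact (h.differentiableAt (by norm_num)).clm_apply (differentiableAt_const _)

theorem pd_comm (j k : Fin 3) (g : (Fin 3 → ℝ) → ℂ) (x : Fin 3 → ℝ)
    (hg : ContDiffAt ℝ 2 g x) : pd j (pd k g) x = pd k (pd j g) x := by
  have h : ContDiffAt ℝ 1 (fderiv ℝ g) x := hg.fderiv_right (by norm_num)
  have hd := h.differentiableAt (by norm_num)
  have key : ∀ a b : Fin 3, pd a (pd b g) x
      = fderiv ℝ (fderiv ℝ g) x (Pi.single a 1) (Pi.single b 1) := by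
    intro a b
    change fderiv ℝ (fun y => fderiv ℝ g y (Pi.single b 1)) x (Pi.single a 1) = _
    rw [fderiv_clm_apply hd (differentiableAt_const _)]
    simp
  rw [key, key]
  exact (hg.isSymmSndFDerivAt (by simp)).eq _ _

theorem quat_re (a b c d : ℂ) : (quat a b c d).re = a := rfl
theorem quat_imI (a b c d : ℂ) : (quat a b c d).imI = b := rfl
theorem quat_imJ (a b c d : ℂ) : (quat a b c d).imJ = c := rfl
theorem quat_imK (a b c d : ℂ) : (quat a b c d).imK = d := rfl

theorem quat_mul (a b c d a' b' c' d' : ℂ) : quat a b c d * quat a' b' c' d' = quat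
    (a * a' - b * b' - c * c' - d * d') (a * b' + b * a' + c * d' - d * c')
    (a * c' - b * d' + c * a' + d * b') (a * d' + b * c' - c * b' + d * a') := by
  ext <;> simp [quat_re, quat_imI, quat_imJ, quat_imK]

theorem quat_sub (a b c d a' b' c' d' : ℂ) : quat a b c d - quat a' b' c' d' = quat
    (a - a') (b - b') (c - c') (d - d') := by
  ext <;> simp [quat_re, quat_imI, quat_imJ, quat_imK]

theorem quat_add (a b c d a' b' c' d' : ℂ) : quat a b c d + quat a' b' c' d' = quat
    (a + a') (b + b') (c + c') (d + d') := by
  ext <;> simp [quat_re, quat_imI, quat_imJ, quat_imK]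

theorem quat_neg (a b c d : ℂ) : - quat a b c d = quat (-a) (-b) (-c) (-d) := by
  ext <;> simp [quat_re, quat_imI, quat_imJ, quat_imK]

theorem quat_coe (a : ℂ) : (a : HC) = quat a 0 0 0 := by
  ext <;> simp [quat_re, quat_imI, quat_imJ, quat_imK]

theorem quat_congr {a b c d a' b' c' d' : ℂ} (h0 : a = a') (h1 : b = b') (h2 : c = c')
    (h3 : d = d') : quat a b c d = quat a' b' c' d' := by
  rw [h0, h1, h2, h3]

theorem Dq_quat (f0 f1 f2 f3 : (Fin 3 → ℝ) → ℂ) (x : Fin 3 → ℝ) :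
    Dq (fun y => quat (f0 y) (f1 y) (f2 y) (f3 y)) x = quat
      (- pd 0 f1 x - pd 1 f2 x - pd 2 f3 x)
      (pd 0 f0 x + pd 1 f3 x - pd 2 f2 x)
      (pd 1 f0 x + pd 2 f1 x - pd 0 f3 x)
      (pd 2 f0 x + pd 0 f2 x - pd 1 f1 x) := by
  change quat 0 1 0 0 * quat (pd 0 f0 x) (pd 0 f1 x) (pd 0 f2 x) (pd 0 f3 x)
    + quat 0 0 1 0 * quat (pd 1 f0 x) (pd 1 f1 x) (pd 1 f2 x) (pd 1 f3 x)
    + quat 0 0 0 1 * quat (pd 2 f0 x) (pd 2 f1 x) (pd 2 f2 x) (pd 2 f3 x) = _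
  simp only [quat_mul, quat_add]
  apply quat_congr <;> ring

theorem ee0 : ee 0 = quat 1 0 0 0 := by
  change (1 : HC) = _
  rw [← quat_coe]
  exact Quaternion.coe_one.symm
theorem ee1 : ee 1 = quat 0 1 0 0 := rfl
theorem ee2 : ee 2 = quat 0 0 1 0 := rfl
theorem ee3 : ee 3 = quat 0 0 0 1 := rfl

theorem invol0 (a b c d : ℂ) : invol 0 (quat a b c d) = quat a b c d := by simp [invol]
theorem invol1 (a b c d : ℂ) : invol 1 (quat a b c d) = quat a b (-c) (-d) := by
  simp [invol, ee1, quat_mul, quat_neg]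
theorem invol2 (a b c d : ℂ) : invol 2 (quat a b c d) = quat a (-b) c (-d) := by
  simp [invol, ee2, quat_mul, quat_neg]
theorem invol3 (a b c d : ℂ) : invol 3 (quat a b c d) = quat a (-b) (-c) d := by
  simp [invol, ee3, quat_mul, quat_neg]

theorem qc0 (a b c d : ℂ) : qc 0 (quat a b c d) = a := rfl
theorem qc1 (a b c d : ℂ) : qc 1 (quat a b c d) = b := rfl
theorem qc2 (a b c d : ℂ) : qc 2 (quat a b c d) = c := rfl
theorem qc3 (a b c d : ℂ) : qc 3 (quat a b c d) = d := rfl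

theorem core (u0 u1 u2 u3 a0 a1 a2 a3 : (Fin 3 → ℝ) → ℂ) (x : Fin 3 → ℝ)
    (hu0 : ContDiffAt ℝ 2 u0 x) (ha0 : DifferentiableAt ℝ a0 x)
    (hu1 : ContDiffAt ℝ 2 u1 x) (ha1 : DifferentiableAt ℝ a1 x)
    (hu2 : ContDiffAt ℝ 2 u2 x) (ha2 : DifferentiableAt ℝ a2 x)
    (hu3 : ContDiffAt ℝ 2 u3 x) (ha3 : DifferentiableAt ℝ a3 x)
    (hz : a0 x = 0) (u α : (Fin 3 → ℝ) → HC)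
    (hu : u = fun y => quat (u0 y) (u1 y) (u2 y) (u3 y))
    (hα : α = fun y => quat (a0 y) (a1 y) (a2 y) (a3 y)) :
      Dq (fun y => Dq u y - u y * α y) x + (Dq u x - u x * α x) * α x =
      ∑ k : Fin 4,
        (-((lap (fun y => qc k (u y)) x : ℂ) : HC)
          - α x * α x * ((qc k (u x) : ℂ) : HC)
          - Dq (fun y => invol k (α y)) x * ((qc k (u x) : ℂ) : HC)) * ee k := by
  subst hu hα
  have du0 : DifferentiableAt ℝ u0 x := hu0.differentiableAt (by norm_num)
  have dp0 : ∀ k, DifferentiableAt ℝ (pd k u0) x := fun k => pd_diff k u0 x hu0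
  have du1 : DifferentiableAt ℝ u1 x := hu1.differentiableAt (by norm_num)
  have dp1 : ∀ k, DifferentiableAt ℝ (pd k u1) x := fun k => pd_diff k u1 x hu1
  have du2 : DifferentiableAt ℝ u2 x := hu2.differentiableAt (by norm_num)
  have dp2 : ∀ k, DifferentiableAt ℝ (pd k u2) x := fun k => pd_diff k u2 x hu2
  have du3 : DifferentiableAt ℝ u3 x := hu3.differentiableAt (by norm_num)
  have dp3 : ∀ k, DifferentiableAt ℝ (pd k u3) x := fun k => pd_diff k u3 x hu3
  have c010 := pd_comm 1 0 u0 x hu0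
  have c020 := pd_comm 2 0 u0 x hu0
  have c021 := pd_comm 2 1 u0 x hu0
  have c110 := pd_comm 1 0 u1 x hu1
  have c120 := pd_comm 2 0 u1 x hu1
  have c121 := pd_comm 2 1 u1 x hu1
  have c210 := pd_comm 1 0 u2 x hu2
  have c220 := pd_comm 2 0 u2 x hu2
  have c221 := pd_comm 2 1 u2 x hu2
  have c310 := pd_comm 1 0 u3 x hu3
  have c320 := pd_comm 2 0 u3 x hu3
  have c321 := pd_comm 2 1 u3 x hu3
  simp only [Fin.sum_univ_four, invol0, invol1, invol2, invol3, ee0, ee1, ee2, ee3,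
    qc0, qc1, qc2, qc3, Dq_quat, quat_coe, quat_mul, quat_sub, quat_add, quat_neg, lap]
  simp (disch := fun_prop) only [pd_add', pd_sub', pd_neg', pd_mul']
  simp only [hz, c010, c020, c021, c110, c120, c121, c210, c220, c221, c310, c320, c321]
  apply quat_congr <;> ring

/-- the componentwise factorization identity (fact):
`D_α D_{−α} u = Σ_k (−Δu_k − α²u_k − (Dα^{(k)})u_k) e_k` for purely vectorial `α`. -/
theorem factorization_componentwise
    (Ω : Set (Fin 3 → ℝ)) (hΩ : IsOpen Ω)
    (α : (Fin 3 → ℝ) → HC) (hα : QDiffOn α Ω)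
    (hαvec : ∀ x ∈ Ω, (α x).re = 0)
    (u : (Fin 3 → ℝ) → HC) (hu : QC2On u Ω) :
    ∀ x ∈ Ω,
      Dq (fun y => Dq u y - u y * α y) x + (Dq u x - u x * α x) * α x =
      ∑ k : Fin 4,
        (-((lap (fun y => qc k (u y)) x : ℂ) : HC)
          - α x * α x * ((qc k (u x) : ℂ) : HC)
          - Dq (fun y => invol k (α y)) x * ((qc k (u x) : ℂ) : HC)) * ee k := by
  intro x hx
  have hn := hΩ.mem_nhds hx
  obtain ⟨a0, a1, a2, a3⟩ := hα
  obtain ⟨u0, u1, u2, u3⟩ := hu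
  exact core _ _ _ _ _ _ _ _ x
    (u0.contDiffAt hn) (a0.differentiableAt hn) (u1.contDiffAt hn) (a1.differentiableAt hn)
    (u2.contDiffAt hn) (a2.differentiableAt hn) (u3.contDiffAt hn) (a3.differentiableAt hn)
    (hαvec x hx) u α rfl rfl
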